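/- Let α>0, n∈ℕ₀, and let z=x+is, w=x'+is' be points of the upper half-plane ℂ⁺. Then ⟨π(w)ψ_n^α, π(z)ψ_0^α⟩_{L²(ℝ)} = c_n^α · ((z−w)/(z−conj(w)))^n · (2√(s s')/(i(conj(w)−z)))^{α+1}, where c_n^α = √(Γ(n+α+1)/(Γ(α+1)·n!)) and the complex powers are taken with the principal branch (note that 2√(ss')/(i(conj(w)−z)) has positive real part). -/

import Mathlib

/-!
On the Fourier side, `π(z)` acts as the dilation `ξ ↦ z.im * ξ` times a modulation, so by
Parseval (`integral_fourierInv_mul_conj`) the inner product is an integral over `ξ > 0` of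
`ξ ^ α * exp (-p * ξ)` times the Laguerre polynomial `L_n^α (2 * w.im * ξ)`, where
`p = i (conj w - z)` has real part `z.im + w.im > 0`. Integrating the polynomial term by term with
`∫ ξ ^ b * exp (-p ξ) = Γ(b + 1) * (1 / p) ^ (b + 1)` (`integral_rpow_mul_cexp`), the factors
`Γ(k + α + 1)` cancel those in the denominators of the coefficients, and what remains is the
binomial expansion of `(1 - 2 * w.im / p) ^ n`, whose base is `(z - w) / (z - conj w)`
(`integral_laguerre`).

The Gamma integral for complex `p` follows from the one for real `p` by the identity theorem on the
right half-plane. Parseval is obtained from the `L¹` duality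
`∫ 𝓕⁻ f * conj G = ∫ f * conj (𝓕 G)` together with Fourier inversion; this needs only the factor
coming from `ψ_0^α` to be regular, and that is where `α > 0` enters: `ψ̂_0^α` is then continuous at
`0`, and `ψ_0^α(t)`, a constant times `(1 - it)^{-(α/2 + 1)}`, is integrable.
-/

open MeasureTheory Complex

noncomputable section

/-- The generalized Laguerre polynomial `L_n^α(t)`. -/
def laguerre (n : ℕ) (α : ℝ) (t : ℝ) : ℝ :=
  ∑ k ∈ Finset.range (n + 1),
    ((-1 : ℝ) ^ k / (Nat.factorial k : ℝ)) *
      (Real.Gamma (n + α + 1) / (Real.Gamma (k + α + 1) * (Nat.factorial (n - k) : ℝ))) * t ^ k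

/-- The Fourier transform `ψ̂_n^α` of the Laguerre wavelet `ψ_n^α` (convention
`f̂(ξ) = ∫ f(t) e^{-iξt} dt`); it vanishes on `(-∞, 0]`. -/
def psiHat (n : ℕ) (α : ℝ) (ξ : ℝ) : ℝ :=
  if 0 < ξ then
    Real.sqrt (2 ^ (α + 2) * Real.pi * (Nat.factorial n : ℝ) / Real.Gamma (n + α + 1)) *
      ξ ^ (α / 2) * Real.exp (-ξ) * laguerre n α (2 * ξ)
  else 0

/-- The Laguerre wavelet `ψ_n^α ∈ H ⊆ L²(ℝ)`, recovered from `ψ̂_n^α ∈ L¹(0,∞)` by the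
inverse Fourier transform `f(t) = (2π)⁻¹ ∫ f̂(ξ) e^{iξt} dξ`. -/
def psiW (n : ℕ) (α : ℝ) (t : ℝ) : ℂ :=
  (1 / (2 * Real.pi) : ℝ) * ∫ ξ : ℝ, (psiHat n α ξ : ℂ) * Complex.exp (Complex.I * ξ * t)

/-- The time-scale shift `π(z)f(t) = s^{-1/2} f((t-x)/s)` for `z = x + is ∈ ℂ⁺`. -/
def timeScale (z : ℂ) (f : ℝ → ℂ) (t : ℝ) : ℂ :=
  (Real.sqrt z.im : ℂ)⁻¹ * f ((t - z.re) / z.im)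

/-- The `L²(ℝ)` inner product `⟨f, g⟩ = ∫ f(t) conj(g(t)) dt` (linear in the first argument). -/
def L2inner (f g : ℝ → ℂ) : ℂ := ∫ t : ℝ, f t * (starRingEnd ℂ) (g t)

section Laguerre

open Set Filter FourierTransform
open scoped Topology

/-! ### The Gamma integral with a complex rate -/

lemma integrableOn_rpow_mul_exp {b c : ℝ} (hb : -1 < b) (hc : 0 < c) :
    IntegrableOn (fun ξ : ℝ ↦ ξ ^ b * Real.exp (-(c * ξ))) (Ioi 0) := by
  simpa using integrableOn_rpow_mul_exp_neg_mul_rpow hb one_pos hc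

lemma norm_rpow_mul_cexp (b : ℝ) (p : ℂ) {ξ : ℝ} (hξ : 0 < ξ) :
    ‖((ξ ^ b : ℝ) : ℂ) * cexp (-(p * ξ))‖ = ξ ^ b * Real.exp (-(p.re * ξ)) := by
  rw [norm_mul, Complex.norm_exp, Complex.norm_real, Real.norm_of_nonneg (by positivity)]
  simp

lemma aestronglyMeasurable_rpow_mul_cexp (b : ℝ) (p : ℂ) (μ : Measure ℝ) :
    AEStronglyMeasurable (fun ξ : ℝ ↦ ((ξ ^ b : ℝ) : ℂ) * cexp (-(p * ξ))) μ :=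
  Measurable.aestronglyMeasurable (by fun_prop)

lemma integrableOn_rpow_mul_cexp {b : ℝ} (hb : -1 < b) {p : ℂ} (hp : 0 < p.re) :
    IntegrableOn (fun ξ : ℝ ↦ ((ξ ^ b : ℝ) : ℂ) * cexp (-(p * ξ))) (Ioi 0) := by
  refine (integrableOn_rpow_mul_exp hb hp).mono' (aestronglyMeasurable_rpow_mul_cexp _ _ _) ?_
  filter_upwards [self_mem_ae_restrict measurableSet_Ioi] with ξ hξ
  exact (norm_rpow_mul_cexp b p hξ).le

lemma one_div_mem_slitPlane {p : ℂ} (hp : 0 < p.re) : 1 / p ∈ slitPlane := by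
  have h0 : p ≠ 0 := by rintro rfl; simp at hp
  left
  rw [one_div, Complex.inv_re]
  exact div_pos hp (normSq_pos.2 h0)

/-- The Gamma integral with a complex rate `p`, `0 < Re p`: both sides are holomorphic in `p` on the
right half-plane and agree for real `p`. -/
lemma integral_rpow_mul_cexp {b : ℝ} (hb : -1 < b) {p : ℂ} (hp : 0 < p.re) :
    ∫ ξ in Ioi (0 : ℝ), ((ξ ^ b : ℝ) : ℂ) * cexp (-(p * ξ)) =
      (1 / p) ^ ((b : ℂ) + 1) * (Real.Gamma (b + 1) : ℂ) := by
  set U : Set ℂ := {q | 0 < q.re} with hU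
  have hUo : IsOpen U := isOpen_lt continuous_const Complex.continuous_re
  have hUc : IsPreconnected U := (convex_halfSpace_re_gt 0).isPreconnected
  have hL : AnalyticOnNhd ℂ
      (fun q : ℂ ↦ ∫ ξ in Ioi (0 : ℝ), ((ξ ^ b : ℝ) : ℂ) * cexp (-(q * ξ))) U := by
    refine DifferentiableOn.analyticOnNhd (fun q hq ↦ ?_) hUo
    have hq2 : 0 < q.re / 2 := half_pos hq
    refine (hasDerivAt_integral_of_dominated_loc_of_deriv_le
      (F' := fun q' (ξ : ℝ) ↦ ((ξ ^ b : ℝ) : ℂ) * (cexp (-(q' * ξ)) * (-ξ)))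
      (bound := fun ξ ↦ ξ ^ (b + 1) * Real.exp (-(q.re / 2 * ξ)))
      (s := {q' | q.re / 2 < q'.re}) ?_ ?_ ?_ ?_ ?_ ?_ ?_).2.differentiableAt.differentiableWithinAt
    · exact (isOpen_lt continuous_const Complex.continuous_re).mem_nhds (show q.re / 2 < q.re from half_lt_self hq)
    · exact Eventually.of_forall fun q' ↦ aestronglyMeasurable_rpow_mul_cexp _ _ _
    · exact integrableOn_rpow_mul_cexp hb hq
    · exact Measurable.aestronglyMeasurable (by fun_prop)
    · filter_upwards [self_mem_ae_restrict measurableSet_Ioi] with ξ hξ q' hq'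
      rw [← mul_assoc, norm_mul, norm_rpow_mul_cexp b q' hξ, norm_neg, Complex.norm_real,
        Real.norm_of_nonneg (le_of_lt hξ), Real.rpow_add hξ, Real.rpow_one, mul_right_comm]
      have hξ' : (0 : ℝ) < ξ := hξ
      have : q.re / 2 < q'.re := hq'
      gcongr
    · exact integrableOn_rpow_mul_exp (by linarith) hq2
    · refine Eventually.of_forall fun ξ q' _ ↦ HasDerivAt.const_mul _ ?_
      simpa using ((hasDerivAt_id q').mul_const (ξ : ℂ)).neg.cexp
  have hR : AnalyticOnNhd ℂ
      (fun q : ℂ ↦ (1 / q) ^ ((b : ℂ) + 1) * (Real.Gamma (b + 1) : ℂ)) U := by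
    refine DifferentiableOn.analyticOnNhd (fun q hq ↦ ?_) hUo
    have h0 : q ≠ 0 := by rintro rfl; simp [hU] at hq
    refine DifferentiableAt.differentiableWithinAt ?_
    refine DifferentiableAt.mul_const (DifferentiableAt.cpow_const ?_ (one_div_mem_slitPlane hq)) _
    fun_prop (disch := assumption)
  refine hL.eqOn_of_preconnected_of_frequently_eq hR hUc (z₀ := 1) (by simp [hU]) ?_ hp
  have hreal : ∀ r : ℝ, 0 < r →
      (∫ ξ in Ioi (0 : ℝ), ((ξ ^ b : ℝ) : ℂ) * cexp (-((r : ℂ) * ξ))) =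
        (1 / (r : ℂ)) ^ ((b : ℂ) + 1) * (Real.Gamma (b + 1) : ℂ) := by
    intro r hr
    have h := Real.integral_rpow_mul_exp_neg_mul_Ioi (a := b + 1) (by linarith) hr
    have h2 := congrArg (fun x : ℝ ↦ (x : ℂ)) h
    simp only [add_sub_cancel_right] at h2
    rw [← integral_complex_ofReal, ofReal_mul, ofReal_cpow (by positivity)] at h2
    push_cast at h2 ⊢
    exact h2
  -- the points `1 + u`, `u` real and small, accumulate at `1`
  have ht : Tendsto (fun u : ℝ ↦ ((u : ℝ) : ℂ)) (𝓝[≠] 1) (𝓝[≠] (1 : ℂ)) := by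
    refine tendsto_nhdsWithin_iff.2 ⟨?_, ?_⟩
    · exact (Complex.continuous_ofReal.tendsto' 1 1 (by simp)).mono_left nhdsWithin_le_nhds
    · filter_upwards [self_mem_nhdsWithin] with u hu
      simpa using hu
  refine ht.frequently (Eventually.frequently ?_)
  filter_upwards [mem_nhdsWithin_of_mem_nhds (lt_mem_nhds (one_pos : (0 : ℝ) < 1))] with u hu
  exact hreal u hu

/-! ### The Laguerre wavelets and their Fourier transforms -/

/-- The normalising constant of `ψ̂_n^α`. -/
def psiConst (n : ℕ) (α : ℝ) : ℝ :=
  Real.sqrt (2 ^ (α + 2) * Real.pi * (Nat.factorial n : ℝ) / Real.Gamma (n + α + 1))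

/-- The coefficient of `t ^ k` in `L_n^α(t)`, for `k ≤ n`. -/
def laguerreCoeff (n : ℕ) (α : ℝ) (k : ℕ) : ℝ :=
  ((-1 : ℝ) ^ k / (Nat.factorial k : ℝ)) *
      (Real.Gamma (n + α + 1) / (Real.Gamma (k + α + 1) * (Nat.factorial (n - k) : ℝ)))

lemma laguerre_zero {α : ℝ} (hα : 0 < α) (t : ℝ) : laguerre 0 α t = 1 := by
  have : Real.Gamma (α + 1) ≠ 0 := (Real.Gamma_pos_of_pos (by linarith)).ne'
  simp [laguerre, this]

lemma psiHat_of_pos (n : ℕ) (α : ℝ) {ξ : ℝ} (hξ : 0 < ξ) :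
    psiHat n α ξ = psiConst n α * ξ ^ (α / 2) * Real.exp (-ξ) * laguerre n α (2 * ξ) :=
  if_pos hξ

lemma psiHat_of_nonpos (n : ℕ) (α : ℝ) {ξ : ℝ} (hξ : ξ ≤ 0) : psiHat n α ξ = 0 :=
  if_neg hξ.not_gt

lemma integrable_psiHat (n : ℕ) {α : ℝ} (hα : 0 < α) : Integrable (psiHat n α) := by
  have h : Integrable ((Ioi (0 : ℝ)).indicator fun ξ ↦ ∑ k ∈ Finset.range (n + 1),
      psiConst n α * laguerreCoeff n α k * 2 ^ k *
        (ξ ^ (α / 2 + k) * Real.exp (-(1 * ξ)))) := by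
    rw [integrable_indicator_iff measurableSet_Ioi]
    refine integrable_finsetSum _ fun k _ ↦ Integrable.const_mul ?_ _
    exact integrableOn_rpow_mul_exp (by have : (0 : ℝ) ≤ k := k.cast_nonneg; linarith) one_pos
  refine h.congr (Eventually.of_forall fun ξ ↦ ?_)
  rcases lt_or_ge 0 ξ with hξ | hξ
  · rw [indicator_of_mem (show ξ ∈ Ioi 0 from hξ), psiHat_of_pos n α hξ, laguerre, Finset.mul_sum]
    refine Finset.sum_congr rfl fun k _ ↦ ?_
    rw [Real.rpow_add hξ, Real.rpow_natCast, laguerreCoeff]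
    ring_nf
  · rw [indicator_of_notMem (by simpa using hξ), psiHat_of_nonpos n α hξ]

lemma continuous_psiHat_zero {α : ℝ} (hα : 0 < α) : Continuous (psiHat 0 α) := by
  have h : psiHat 0 α = fun ξ ↦ psiConst 0 α * (max ξ 0) ^ (α / 2) * Real.exp (-ξ) := by
    ext ξ
    rcases lt_or_ge 0 ξ with hξ | hξ
    · rw [psiHat_of_pos 0 α hξ, laguerre_zero hα, max_eq_left hξ.le, mul_one]
    · rw [psiHat_of_nonpos 0 α hξ, max_eq_right hξ, Real.zero_rpow (by positivity)]
      ring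
  have h2 : Continuous fun ξ : ℝ ↦ (max ξ 0) ^ (α / 2) :=
    (continuous_id.max continuous_const).rpow_const fun _ ↦ Or.inr (by positivity)
  rw [h]
  fun_prop

/-- The closed form of `ψ_0^α`: a constant times `(1 - it)^{-(α/2 + 1)}`. -/
lemma psiW_zero {α : ℝ} (hα : 0 < α) (t : ℝ) :
    psiW 0 α t = ((1 / (2 * Real.pi) : ℝ) * (psiConst 0 α : ℂ) * (Real.Gamma (α / 2 + 1) : ℂ)) *
      (1 / (1 - I * t)) ^ ((α / 2 + 1 : ℝ) : ℂ) := by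
  have hi : ∫ ξ : ℝ, (psiHat 0 α ξ : ℂ) * cexp (I * ξ * t) =
      ∫ ξ in Ioi (0 : ℝ), (psiConst 0 α : ℂ) *
        (((ξ ^ (α / 2) : ℝ) : ℂ) * cexp (-((1 - I * t) * ξ))) := by
    rw [← integral_indicator measurableSet_Ioi]
    refine integral_congr_ae (Eventually.of_forall fun ξ ↦ ?_)
    rcases lt_or_ge 0 ξ with hξ | hξ
    · simp only
      rw [indicator_of_mem (show ξ ∈ Ioi 0 from hξ), psiHat_of_pos 0 α hξ, laguerre_zero hα]
      push_cast
      rw [show -((1 - I * t) * (ξ : ℂ)) = -ξ + I * ξ * t by ring, Complex.exp_add]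
      ring
    · simp only
      rw [indicator_of_notMem (by simpa using hξ), psiHat_of_nonpos 0 α hξ]
      simp
  rw [psiW, hi, integral_const_mul, integral_rpow_mul_cexp (by linarith) (by simp)]
  push_cast
  ring

/-- Here `α > 0` is essential: `ψ_0^α(t)` decays exactly like `|t|^{-(α/2 + 1)}`. -/
lemma integrable_psiW_zero {α : ℝ} (hα : 0 < α) : Integrable (psiW 0 α) := by
  have h : psiW 0 α = fun t : ℝ ↦ ((1 / (2 * Real.pi) : ℝ) * (psiConst 0 α : ℂ) *
      (Real.Gamma (α / 2 + 1) : ℂ)) * (1 / (1 - I * t)) ^ ((α / 2 + 1 : ℝ) : ℂ) :=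
    funext (psiW_zero hα)
  rw [h]
  refine Integrable.const_mul ?_ _
  have hb : Integrable fun t : ℝ ↦ ((1 : ℝ) + ‖t‖ ^ 2) ^ (-(α / 2 + 1) / 2) :=
    integrable_rpow_neg_one_add_norm_sq (by simp; linarith)
  refine hb.mono' (Measurable.aestronglyMeasurable (by fun_prop)) (Eventually.of_forall fun t ↦ ?_)
  have hn : ‖1 - I * (t : ℂ)‖ = (1 + ‖t‖ ^ 2) ^ (1 / 2 : ℝ) := by
    rw [← Real.sqrt_eq_rpow, Complex.norm_eq_sqrt_sq_add_sq]
    simp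
  have hp : (0 : ℝ) < 1 + ‖t‖ ^ 2 := by positivity
  rw [Complex.norm_cpow_real, norm_div, norm_one, hn, one_div, ← Real.rpow_neg hp.le,
    ← Real.rpow_mul hp.le]
  exact le_of_eq (congrArg _ (by ring))

/-! ### Time-scale shifts and the Parseval identity -/

/-- The Fourier transform of `π(z) ψ_n^α`, in the normalisation
`𝓕 f v = ∫ f(t) e^{-2πivt} dt` (so `v` corresponds to `ξ = 2πv`). -/
def shiftHat (n : ℕ) (α : ℝ) (z : ℂ) (v : ℝ) : ℂ :=
  (Real.sqrt z.im : ℂ) * (psiHat n α (2 * Real.pi * z.im * v) : ℂ) *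
    cexp (-(2 * Real.pi * v * z.re * I))

lemma timeScale_psiW (n : ℕ) (α : ℝ) {z : ℂ} (hz : 0 < z.im) :
    timeScale z (psiW n α) = 𝓕⁻ (shiftHat n α z) := by
  ext t
  have ha : 0 < 2 * Real.pi * z.im := by positivity
  have hs : ((Real.sqrt z.im : ℝ) : ℂ) ≠ 0 := by simpa using (Real.sqrt_pos.2 hz).ne'
  have hss : (z.im : ℂ) = (Real.sqrt z.im : ℂ) * (Real.sqrt z.im : ℂ) := by
    rw [← ofReal_mul, Real.mul_self_sqrt hz.le]
  have hz0 : (z.im : ℂ) ≠ 0 := by simpa using hz.ne'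
  have hpi : (Real.pi : ℂ) ≠ 0 := by simp [Real.pi_ne_zero]
  have hsub := Measure.integral_comp_mul_left
    (fun ξ : ℝ ↦ (psiHat n α ξ : ℂ) * cexp (I * ξ * (((t - z.re) / z.im : ℝ) : ℂ)))
    (2 * Real.pi * z.im)
  rw [abs_of_pos (inv_pos.2 ha), eq_inv_smul_iff₀ ha.ne'] at hsub
  rw [timeScale, psiW, ← hsub, Real.fourierInv_eq', real_smul]
  have hI : ∫ v : ℝ, cexp ((2 * Real.pi * inner ℝ v t : ℝ) * I) • shiftHat n α z v =
      (Real.sqrt z.im : ℂ) * ∫ v : ℝ, (psiHat n α (2 * Real.pi * z.im * v) : ℂ) *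
        cexp (I * (2 * Real.pi * z.im * v : ℝ) * (((t - z.re) / z.im : ℝ) : ℂ)) := by
    rw [← integral_const_mul]
    congr 1 with v
    rw [shiftHat, smul_eq_mul]
    have : I * (2 * Real.pi * z.im * v : ℝ) * (((t - z.re) / z.im : ℝ) : ℂ) =
        ((2 * Real.pi * inner ℝ v t : ℝ) * I) + -(2 * Real.pi * v * z.re * I) := by
      simp only [RCLike.inner_apply, conj_trivial]
      push_cast
      field_simp
      ring
    rw [this, Complex.exp_add]
    ring
  rw [hI]
  push_cast
  set J := ∫ v : ℝ, (psiHat n α (2 * Real.pi * z.im * v) : ℂ) *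
        cexp (I * (2 * Real.pi * z.im * v) * (((t - z.re) / z.im)))
  rw [← mul_assoc, ← mul_assoc, ← mul_assoc]
  congr 1
  field_simp
  rw [sq]
  exact hss

lemma integrable_shiftHat (n : ℕ) {α : ℝ} (hα : 0 < α) {z : ℂ} (hz : 0 < z.im) :
    Integrable (shiftHat n α z) := by
  have h := (((integrable_psiHat n hα).comp_mul_left' (R := 2 * Real.pi * z.im)
    (by positivity)).ofReal (𝕜 := ℂ)).const_mul (Real.sqrt z.im : ℂ)
  refine h.mul_bdd (c := 1) (Continuous.aestronglyMeasurable (by fun_prop))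
    (Eventually.of_forall fun v ↦ ?_)
  rw [Complex.norm_exp]
  simp

lemma continuous_shiftHat_zero {α : ℝ} (hα : 0 < α) (z : ℂ) : Continuous (shiftHat 0 α z) := by
  have := continuous_psiHat_zero hα
  unfold shiftHat
  fun_prop

lemma integrable_fourierInv_shiftHat_zero {α : ℝ} (hα : 0 < α) {z : ℂ} (hz : 0 < z.im) :
    Integrable (𝓕⁻ (shiftHat 0 α z)) := by
  rw [← timeScale_psiW 0 α hz]
  exact (((integrable_psiW_zero hα).comp_div hz.ne').comp_sub_right z.re).const_mul _

/-- Parseval's identity for integrable `f` and `g`, when `g` is continuous and `𝓕⁻ g` is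
integrable. -/
lemma integral_fourierInv_mul_conj {f g : ℝ → ℂ} (hf : Integrable f) (hg : Integrable g)
    (hgc : Continuous g) (hg' : Integrable (𝓕⁻ g)) :
    ∫ t, 𝓕⁻ f t * (starRingEnd ℂ) (𝓕⁻ g t) = ∫ v, f v * (starRingEnd ℂ) (g v) := by
  have hFg : Integrable (𝓕 g) := by
    refine hg'.comp_neg.congr (Eventually.of_forall fun t ↦ ?_)
    simp [Real.fourierInv_eq_fourier_neg]
  have h := VectorFourier.integral_sesq_fourierIntegral_eq_neg_flip (μ := volume) (ν := volume)
    (L := -innerₗ ℝ) (innerSL ℂ) Real.continuous_fourierChar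
    (continuous_inner (𝕜 := ℝ) (E := ℝ)).neg hf hg'
  have h1 : VectorFourier.fourierIntegral Real.fourierChar volume (-innerₗ ℝ) f = 𝓕⁻ f := rfl
  have h2 : VectorFourier.fourierIntegral Real.fourierChar volume (-(-innerₗ ℝ).flip) (𝓕⁻ g) =
      g := by
    rw [← hgc.fourier_fourierInv_eq hg hFg]
    have : (-(-innerₗ ℝ).flip) = innerₗ ℝ := by
      ext
      simp
    rw [this, hgc.fourier_fourierInv_eq hg hFg]
    exact hgc.fourier_fourierInv_eq hg hFg
  rw [h1, h2] at h
  have h3 := congrArg (starRingEnd ℂ) h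
  rw [← integral_conj, ← integral_conj] at h3
  simpa [RCLike.inner_apply, mul_comm] using h3

lemma L2inner_timeScale (n : ℕ) {α : ℝ} (hα : 0 < α) {z w : ℂ} (hz : 0 < z.im) (hw : 0 < w.im) :
    L2inner (timeScale w (psiW n α)) (timeScale z (psiW 0 α)) =
      ∫ v, shiftHat n α w v * (starRingEnd ℂ) (shiftHat 0 α z v) := by
  rw [L2inner, timeScale_psiW n α hw, timeScale_psiW 0 α hz]
  exact integral_fourierInv_mul_conj (integrable_shiftHat n hα hw) (integrable_shiftHat 0 hα hz)
    (continuous_shiftHat_zero hα z) (integrable_fourierInv_shiftHat_zero hα hz)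

/-! ### The integral on the Fourier side -/

/-- Multiplying the `k`-th Laguerre coefficient by `Γ(k + α + 1)` leaves a binomial coefficient. -/
lemma sum_laguerreCoeff {α : ℝ} (hα : 0 < α) (n : ℕ) (x : ℂ) :
    ∑ k ∈ Finset.range (n + 1), (laguerreCoeff n α k : ℂ) * (Real.Gamma (k + α + 1) : ℂ) * x ^ k =
      (Real.Gamma (n + α + 1) : ℂ) / (Nat.factorial n : ℂ) * (1 - x) ^ n := by
  rw [sub_eq_neg_add, add_pow, Finset.mul_sum]
  refine Finset.sum_congr rfl fun k hk ↦ ?_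
  have hkn : k ≤ n := Nat.lt_succ_iff.1 (Finset.mem_range.1 hk)
  have hG : (Real.Gamma (k + α + 1) : ℂ) ≠ 0 :=
    ofReal_ne_zero.2 (Real.Gamma_pos_of_pos (by positivity)).ne'
  have h1 : (Nat.factorial n : ℂ) ≠ 0 := by exact_mod_cast Nat.factorial_ne_zero n
  have h2 : (Nat.factorial k : ℂ) ≠ 0 := by exact_mod_cast Nat.factorial_ne_zero k
  have h3 : (Nat.factorial (n - k) : ℂ) ≠ 0 := by exact_mod_cast Nat.factorial_ne_zero _
  rw [Nat.cast_choose ℂ hkn, laguerreCoeff, neg_pow x]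
  push_cast
  field_simp
  simp

/-- The Laplace transform of `ξ ^ α * L_n^α (2 s ξ)` at `p`. -/
lemma integral_laguerre {α : ℝ} (hα : 0 < α) (n : ℕ) (s : ℝ) {p : ℂ} (hp : 0 < p.re) :
    ∫ ξ in Ioi (0 : ℝ), (laguerre n α (2 * (s * ξ)) : ℂ) *
        (((ξ ^ α : ℝ) : ℂ) * cexp (-(p * ξ))) =
      (Real.Gamma (n + α + 1) : ℂ) / (Nat.factorial n : ℂ) * (1 - 2 * s / p) ^ n *
        (1 / p) ^ ((α : ℂ) + 1) := by
  have hp0 : p ≠ 0 := by rintro rfl; simp at hp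
  have hb : ∀ k : ℕ, -1 < α + k := fun k ↦ by
    have : (0 : ℝ) ≤ k := k.cast_nonneg
    linarith
  have h1 : ∀ ξ ∈ Ioi (0 : ℝ), (laguerre n α (2 * (s * ξ)) : ℂ) *
      (((ξ ^ α : ℝ) : ℂ) * cexp (-(p * ξ))) = ∑ k ∈ Finset.range (n + 1),
        ((laguerreCoeff n α k : ℂ) * (2 * s) ^ k) *
          (((ξ ^ (α + k) : ℝ) : ℂ) * cexp (-(p * ξ))) := by
    intro ξ hξ
    rw [laguerre, ofReal_sum, Finset.sum_mul]
    refine Finset.sum_congr rfl fun k _ ↦ ?_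
    rw [Real.rpow_add hξ, Real.rpow_natCast, ← laguerreCoeff]
    push_cast
    ring
  rw [setIntegral_congr_fun measurableSet_Ioi h1, integral_finsetSum _ fun k _ ↦
    (integrableOn_rpow_mul_cexp (hb k) hp).const_mul _, ← sum_laguerreCoeff hα, Finset.sum_mul]
  refine Finset.sum_congr rfl fun k _ ↦ ?_
  rw [integral_const_mul, integral_rpow_mul_cexp (hb k) hp,
    show (((α + k : ℝ) : ℂ) + 1) = ((α : ℂ) + 1) + (k : ℕ) by push_cast; ring,
    cpow_add _ _ (one_div_ne_zero hp0), cpow_natCast, show α + k + 1 = k + α + 1 by ring,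
    show 2 * (s : ℂ) / p = 2 * s * (1 / p) by ring, mul_pow _ (1 / p)]
  ring

/-- The Fourier-side inner product, after the substitution `ξ = 2πv`. -/
lemma integral_shiftHat (n : ℕ) {α : ℝ} (hα : 0 < α) {z w : ℂ} (hz : 0 < z.im) (hw : 0 < w.im) :
    ∫ v, shiftHat n α w v * (starRingEnd ℂ) (shiftHat 0 α z v) =
      ((1 / (2 * Real.pi) * (psiConst n α * psiConst 0 α) *
        Real.sqrt (z.im * w.im) ^ (α + 1) : ℝ) : ℂ) *
      ((Real.Gamma (n + α + 1) : ℂ) / (Nat.factorial n : ℂ) *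
        (1 - 2 * w.im / (I * ((starRingEnd ℂ) w - z))) ^ n *
        (1 / (I * ((starRingEnd ℂ) w - z))) ^ ((α : ℂ) + 1)) := by
  set p : ℂ := I * ((starRingEnd ℂ) w - z) with hp
  have hpre : p.re = z.im + w.im := by simp [hp]
  have hpim : p.im = w.re - z.re := by simp [hp]
  have hppos : 0 < p.re := by rw [hpre]; positivity
  have hpeq : p = (z.im : ℂ) + w.im + (w.re - z.re) * I := by
    rw [← re_add_im p, hpre, hpim]
    push_cast
    ring
  rw [← integral_laguerre hα n w.im hppos, ← integral_const_mul,
    ← integral_indicator measurableSet_Ioi]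
  have hsub := Measure.integral_comp_mul_left ((Ioi (0 : ℝ)).indicator fun ξ ↦
    ((1 / (2 * Real.pi) * (psiConst n α * psiConst 0 α) *
        Real.sqrt (z.im * w.im) ^ (α + 1) : ℝ) : ℂ) *
      ((laguerre n α (2 * (w.im * ξ)) : ℂ) * (((ξ ^ α : ℝ) : ℂ) * cexp (-(p * ξ)))))
    (2 * Real.pi)
  have h2pi : (0 : ℝ) < 2 * Real.pi := by positivity
  rw [abs_of_pos (inv_pos.2 h2pi), eq_inv_smul_iff₀ h2pi.ne'] at hsub
  rw [← hsub, ← integral_smul]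
  refine integral_congr_ae (Eventually.of_forall fun v ↦ ?_)
  simp only
  rcases lt_or_ge 0 v with hv | hv
  · have hξ : 0 < 2 * Real.pi * v := by positivity
    rw [indicator_of_mem (show 2 * Real.pi * v ∈ Ioi 0 from hξ), shiftHat, shiftHat,
      psiHat_of_pos n α (by positivity), psiHat_of_pos 0 α (by positivity), laguerre_zero hα]
    set ξ := 2 * Real.pi * v with hξd
    rw [show 2 * Real.pi * w.im * v = w.im * ξ by rw [hξd]; ring,
      show 2 * Real.pi * z.im * v = z.im * ξ by rw [hξd]; ring]
    have hpow : Real.sqrt (z.im * w.im) ^ (α + 1) =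
        Real.sqrt w.im * Real.sqrt z.im * (w.im ^ (α / 2) * z.im ^ (α / 2)) := by
      rw [Real.rpow_add (Real.sqrt_pos.2 (by positivity)), Real.rpow_one, Real.sqrt_mul hz.le,
        Real.mul_rpow (by positivity) (by positivity), Real.sqrt_eq_rpow, Real.sqrt_eq_rpow,
        ← Real.rpow_mul hz.le, ← Real.rpow_mul hw.le, one_div_mul_eq_div]
      ring
    have hξpow : ξ ^ α = ξ ^ (α / 2) * ξ ^ (α / 2) := by
      rw [← Real.rpow_add hξ, add_halves]
    have he : cexp (-(p * ξ)) = (Real.exp (-(w.im * ξ)) : ℂ) * (Real.exp (-(z.im * ξ)) : ℂ) *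
        (cexp (-(2 * Real.pi * v * w.re * I)) *
          (starRingEnd ℂ) (cexp (-(2 * Real.pi * v * z.re * I)))) := by
      rw [← Complex.exp_conj, ofReal_exp, ofReal_exp, ← Complex.exp_add, ← Complex.exp_add,
        ← Complex.exp_add, hpeq, hξd]
      congr 1
      simp only [map_neg, map_mul, conj_ofReal, conj_I, map_ofNat]
      push_cast
      ring
    rw [hpow, hξpow, he, Real.mul_rpow hw.le hξ.le, Real.mul_rpow hz.le hξ.le]
    simp only [map_mul, conj_ofReal, real_smul]
    have hpi : (Real.pi : ℂ) ≠ 0 := by simp [Real.pi_ne_zero]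
    push_cast
    field_simp
  · have hξ : 2 * Real.pi * v ≤ 0 := mul_nonpos_of_nonneg_of_nonpos h2pi.le hv
    rw [indicator_of_notMem (by simpa using hξ), shiftHat, psiHat_of_nonpos n α]
    · simp
    · rw [mul_right_comm]
      exact mul_nonpos_of_nonpos_of_nonneg hξ hw.le

lemma psiConst_mul {α : ℝ} (hα : 0 < α) (n : ℕ) :
    1 / (2 * Real.pi) * (psiConst n α * psiConst 0 α) *
        (Real.Gamma (n + α + 1) / (Nat.factorial n : ℝ)) =
      2 ^ (α + 1) * Real.sqrt (Real.Gamma (n + α + 1) /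
        (Real.Gamma (α + 1) * (Nat.factorial n : ℝ))) := by
  have hG : 0 < Real.Gamma (n + α + 1) := Real.Gamma_pos_of_pos (by positivity)
  have hG0 : 0 < Real.Gamma (α + 1) := Real.Gamma_pos_of_pos (by positivity)
  have hn : (0 : ℝ) < Nat.factorial n := by exact_mod_cast Nat.factorial_pos n
  have hpi := Real.pi_pos
  rw [← sq_eq_sq₀ (by unfold psiConst; positivity) (by positivity)]
  simp only [mul_pow, div_pow, psiConst]
  rw [Real.sq_sqrt (by positivity), Real.sq_sqrt (by simp; positivity), Real.sq_sqrt (by positivity),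
    show α + 2 = (α + 1) + 1 by ring, Real.rpow_add two_pos (α + 1) 1]
  simp
  field_simp

end Laguerre

theorem stmt0 (n : ℕ) (α : ℝ) (hα : 0 < α) (z w : ℂ) (hz : 0 < z.im) (hw : 0 < w.im) :
    L2inner (timeScale w (psiW n α)) (timeScale z (psiW 0 α)) =
      (Real.sqrt (Real.Gamma (n + α + 1) / (Real.Gamma (α + 1) * (Nat.factorial n : ℝ))) : ℂ) *
        ((z - w) / (z - (starRingEnd ℂ) w)) ^ n *
        ((2 * (Real.sqrt (z.im * w.im) : ℂ)) / (Complex.I * ((starRingEnd ℂ) w - z))) ^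
          ((α : ℂ) + 1) := by
  have hG : (I * ((starRingEnd ℂ) w - z)).re = z.im + w.im := by simp
  set p : ℂ := I * ((starRingEnd ℂ) w - z) with hp
  have hp0 : p ≠ 0 := by
    intro h
    rw [h, Complex.zero_re] at hG
    linarith
  have hzw : z - (starRingEnd ℂ) w ≠ 0 := by
    intro h
    apply hp0
    rw [hp, ← neg_sub, h]
    simp
  have hbase : 1 - 2 * (w.im : ℂ) / p = (z - w) / (z - (starRingEnd ℂ) w) := by
    have hpz : p = -I * (z - (starRingEnd ℂ) w) := by rw [hp]; ring
    have hwc : 2 * (w.im : ℂ) = -I * (w - (starRingEnd ℂ) w) := by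
      rw [Complex.sub_conj]
      push_cast
      linear_combination (2 * (w.im : ℂ)) * I_mul_I
    rw [hpz, hwc, mul_div_mul_left _ _ (neg_ne_zero.2 I_ne_zero)]
    field_simp
    ring
  -- a positive real factor can be pulled out of a principal-branch power
  have hr : (0 : ℝ) < 2 * Real.sqrt (z.im * w.im) := by positivity
  have hcpow : ((2 * (Real.sqrt (z.im * w.im) : ℂ)) / p) ^ ((α : ℂ) + 1) =
      ((2 ^ (α + 1) * Real.sqrt (z.im * w.im) ^ (α + 1) : ℝ) : ℂ) * (1 / p) ^ ((α : ℂ) + 1) := by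
    have hr' : 2 * (Real.sqrt (z.im * w.im) : ℂ) = ((2 * Real.sqrt (z.im * w.im) : ℝ) : ℂ) := by
      push_cast
      rfl
    have hrC : ((2 * Real.sqrt (z.im * w.im) : ℝ) : ℂ) ≠ 0 := ofReal_ne_zero.2 hr.ne'
    have hip : 1 / p ≠ 0 := one_div_ne_zero hp0
    rw [hr', div_eq_mul_one_div, cpow_def_of_ne_zero (mul_ne_zero hrC hip),
      log_ofReal_mul hr hip, add_mul, Complex.exp_add, ← cpow_def_of_ne_zero hip,
      ofReal_log hr.le, ← cpow_def_of_ne_zero hrC,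
      ← Real.mul_rpow two_pos.le (Real.sqrt_nonneg _), ofReal_cpow hr.le]
    push_cast
    rfl
  have hconst := congrArg (fun x : ℝ ↦ (x : ℂ)) (psiConst_mul hα n)
  push_cast at hconst
  rw [L2inner_timeScale n hα hz hw, integral_shiftHat n hα hz hw, ← hp, hbase, hcpow]
  push_cast
  linear_combination (((Real.sqrt (z.im * w.im) ^ (α + 1) : ℝ) : ℂ) *
    ((z - w) / (z - (starRingEnd ℂ) w)) ^ n * (1 / p) ^ ((α : ℂ) + 1)) * hconst
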